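/- arXiv:1203.1258 — 2 statements merged into one kernel-verified Lean document; each statement's English description precedes it below -/
import Mathlib

section
/- Let V be a finite-dimensional faithful representation of a finite group W over a field k with char(k) = 0 or coprime to |W|. If W is generated by pseudoreflections, then k[V] is a free module over the invariant ring k[V]^W. -/
open MvPolynomial

/-- The action of `g ∈ GL(V)` on `k[V]`: `(g·f)(x) = f(g⁻¹x)`. -/
noncomputable def glAct {n : ℕ} {k : Type*} [Field k]
    (g : LinearMap.GeneralLinearGroup k (Fin n → k)) :
    MvPolynomial (Fin n) k →ₐ[k] MvPolynomial (Fin n) k :=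
  aeval fun i => ∑ j, C (((g⁻¹ :
    LinearMap.GeneralLinearGroup k (Fin n → k)) : (Fin n → k) →ₗ[k] (Fin n → k))
      (Pi.single j 1) i) * X j

/-- A pseudoreflection: an element of `GL(V)` of finite order `> 1` fixing a hyperplane
(the kernel of a nonzero linear form) pointwise. -/
def IsPseudoreflection {n : ℕ} {k : Type*} [Field k]
    (g : LinearMap.GeneralLinearGroup k (Fin n → k)) : Prop :=
  IsOfFinOrder g ∧ g ≠ 1 ∧ ∃ α : (Fin n → k) →ₗ[k] k, α ≠ 0 ∧
    ∀ v : Fin n → k, α v = 0 → ((g : (Fin n → k) →ₗ[k] (Fin n → k)) v = v)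

/-- The subalgebra of `G`-invariant polynomials `k[V]^G`. -/
noncomputable def invariants (n : ℕ) (k : Type*) [Field k]
    (G : Subgroup (LinearMap.GeneralLinearGroup k (Fin n → k))) :
    Subalgebra k (MvPolynomial (Fin n) k) :=
  ⨅ g ∈ G, AlgHom.equalizer (glAct g) (AlgHom.id k (MvPolynomial (Fin n) k))


namespace STC

variable {n : ℕ} {k : Type*} [Field k]

local notation "GLn" => LinearMap.GeneralLinearGroup k (Fin n → k)

lemma glAct_X (g : GLn) (i : Fin n) :
    glAct g (X i) = ∑ j, C (((g⁻¹ : GLn) : (Fin n → k) →ₗ[k] (Fin n → k))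
      (Pi.single j 1) i) * X j := by
  simp [glAct]

lemma glAct_one : glAct (1 : GLn) = AlgHom.id k _ := by
  apply MvPolynomial.algHom_ext
  intro i
  rw [glAct_X]
  rw [Finset.sum_eq_single i]
  · simp
  · intro j _ hj
    simp [Pi.single_apply, hj.symm]
  · simp

lemma glAct_mul (g h : GLn) : glAct (g * h) = (glAct g).comp (glAct h) := by
  apply MvPolynomial.algHom_ext
  intro i
  rw [AlgHom.comp_apply, glAct_X, glAct_X, map_sum]
  simp only [map_mul, algHom_C, glAct_X, Finset.mul_sum]
  rw [Finset.sum_comm]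
  apply Finset.sum_congr rfl
  intro l _
  have hv : ((g⁻¹ : GLn) : (Fin n → k) →ₗ[k] (Fin n → k)) (Pi.single l 1) =
      ∑ j, (((g⁻¹ : GLn) : (Fin n → k) →ₗ[k] (Fin n → k)) (Pi.single l 1) j) •
        (Pi.single j 1 : Fin n → k) := by
    exact pi_eq_sum_univ' _
  rw [mul_inv_rev, Units.val_mul, Module.End.mul_apply, hv, map_sum, Finset.sum_apply, map_sum,
    Finset.sum_mul]
  apply Finset.sum_congr rfl
  intro j _
  rw [← hv]
  simp only [map_smul, Pi.smul_apply, smul_eq_mul, map_mul, algebraMap_eq]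
  ring

lemma glAct_mul_apply (g h : GLn) (f : MvPolynomial (Fin n) k) :
    glAct (g * h) f = glAct g (glAct h f) := by
  rw [glAct_mul]; rfl

lemma glAct_X_hom (g : GLn) (i : Fin n) : (glAct g (X i)).IsHomogeneous 1 := by
  rw [glAct_X]
  apply IsHomogeneous.sum
  intro j _
  exact isHomogeneous_C_mul_X _ _

lemma glAct_hom (g : GLn) {f : MvPolynomial (Fin n) k} {d : ℕ} (hf : f.IsHomogeneous d) :
    (glAct g f).IsHomogeneous d := by
  have := hf.aeval (S := k) (fun i => glAct g (X i)) (n := 1) (fun i => glAct_X_hom g i)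
  have e : glAct g = aeval (fun i => glAct g (X i)) := by
    apply MvPolynomial.algHom_ext; intro i; simp
  rw [e]
  simpa using this

lemma glAct_component (g : GLn) (f : MvPolynomial (Fin n) k) (d : ℕ) :
    homogeneousComponent d (glAct g f) = glAct g (homogeneousComponent d f) := by
  conv_lhs => rw [← sum_homogeneousComponent f, map_sum, map_sum]
  have : ∀ i, homogeneousComponent d (glAct g (homogeneousComponent i f)) =
      if i = d then glAct g (homogeneousComponent i f) else 0 := fun i => by
    rw [homogeneousComponent_of_mem (glAct_hom g (homogeneousComponent_isHomogeneous i f))]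
    simp [eq_comm]
  simp only [this]
  rw [Finset.sum_ite_eq']
  split_ifs with h
  · rfl
  · rw [homogeneousComponent_eq_zero, map_zero]
    simpa using h

lemma glAct_totalDegree (g : GLn) (f : MvPolynomial (Fin n) k) :
    (glAct g f).totalDegree ≤ f.totalDegree := by
  conv_lhs => rw [← sum_homogeneousComponent f, map_sum]
  apply totalDegree_finsetSum_le
  intro i hi
  refine (glAct_hom g (homogeneousComponent_isHomogeneous i f)).totalDegree_le.trans ?_
  simpa [Nat.lt_succ_iff] using hi

lemma mem_inv (G : Subgroup GLn) (f : MvPolynomial (Fin n) k) :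
    f ∈ invariants n k G ↔ ∀ g ∈ G, glAct g f = f := by
  simp [invariants, Algebra.mem_iInf, AlgHom.mem_equalizer]

/-- Divisibility of `f - s f` by the linear form of the reflecting hyperplane. -/
lemma exists_form (s : GLn) (hs : IsPseudoreflection s) :
    ∃ A : MvPolynomial (Fin n) k, A ≠ 0 ∧ A.IsHomogeneous 1 ∧
      ∀ f, ∃ d, f - glAct s f = A * d := by
  obtain ⟨-, -, α, hα, hfix⟩ := hs
  obtain ⟨v0, hv0⟩ : ∃ v, α v ≠ 0 := by
    by_contra! h
    exact hα (LinearMap.ext h)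
  let T : (Fin n → k) →ₗ[k] (Fin n → k) := ((s⁻¹ : GLn) : (Fin n → k) →ₗ[k] (Fin n → k))
  have hT : ∀ v, α v = 0 → T v = v := by
    intro v hv
    have h1 : T ((s : (Fin n → k) →ₗ[k] (Fin n → k)) v) = v := by
      have : (s⁻¹ * s : GLn) = 1 := inv_mul_cancel s
      have h2 := congrArg (fun g : GLn => (g : (Fin n → k) →ₗ[k] (Fin n → k)) v) this
      exact h2
    rwa [hfix v hv] at h1
  let w : Fin n → k := (α v0)⁻¹ • (v0 - T v0)
  have hw : ∀ v, v - T v = α v • w := by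
    intro v
    have h := hT (v - (α v * (α v0)⁻¹) • v0) (by simp [hv0])
    rw [map_sub, map_smul] at h
    simp only [w, smul_smul, smul_sub]
    linear_combination -h
  let A : MvPolynomial (Fin n) k := ∑ j, C (α (Pi.single j 1)) * X j
  have hX : ∀ i, X i - glAct s (X i) = A * C (w i) := by
    intro i
    have hXi : (X i : MvPolynomial (Fin n) k) =
        ∑ j, C ((Pi.single j 1 : Fin n → k) i) * X j := by
      rw [Finset.sum_eq_single i]
      · simp
      · intro j _ hj
        simp [Pi.single_apply, hj.symm]
      · simp
    rw [glAct_X]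
    conv_lhs => rw [hXi]
    rw [← Finset.sum_sub_distrib, Finset.sum_mul]
    apply Finset.sum_congr rfl
    intro j _
    have := congrFun (hw (Pi.single j 1)) i
    simp only [Pi.sub_apply, Pi.smul_apply, smul_eq_mul, T] at this
    rw [← sub_mul, ← C_sub, this, C_mul]
    ring
  refine ⟨A, ?_, ?_, ?_⟩
  · intro h0
    apply hα
    apply LinearMap.pi_ext'
    intro j
    ext
    have := congrArg (coeff (Finsupp.single j 1)) h0
    simp only [A, coeff_sum, coeff_C_mul, coeff_X, coeff_zero] at this
    rw [Finset.sum_eq_single j] at this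
    · simpa using this
    · intro b _ hb
      rw [if_neg, mul_zero]
      intro h
      exact hb ((Finsupp.single_left_inj one_ne_zero).1 h)
    · simp
  · apply IsHomogeneous.sum
    intro j _
    exact isHomogeneous_C_mul_X _ _
  · have key : (Ideal.Quotient.mkₐ k (Ideal.span {A})).comp (glAct s) =
        Ideal.Quotient.mkₐ k (Ideal.span {A}) := by
      apply MvPolynomial.algHom_ext
      intro i
      symm
      simp only [AlgHom.comp_apply, Ideal.Quotient.mkₐ_eq_mk]
      rw [Ideal.Quotient.eq, Ideal.mem_span_singleton]
      exact ⟨_, hX i⟩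
    intro f
    have := (AlgHom.congr_fun key f).symm
    simp only [AlgHom.comp_apply, Ideal.Quotient.mkₐ_eq_mk] at this
    rw [Ideal.Quotient.eq, Ideal.mem_span_singleton] at this
    exact this

section
variable (G : Subgroup (LinearMap.GeneralLinearGroup k (Fin n → k)))

/-- Extension of an ideal of the invariant ring to the polynomial ring. -/
noncomputable abbrev extI (K : Ideal (invariants n k G)) : Ideal (MvPolynomial (Fin n) k) :=
  K.map (algebraMap (invariants n k G) (MvPolynomial (Fin n) k))

variable {G}

lemma ext_stable (K : Ideal (invariants n k G)) {g : GLn} (hg : g ∈ G)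
    {f : MvPolynomial (Fin n) k} (hf : f ∈ extI G K) : glAct g f ∈ extI G K := by
  have : extI G K ≤ (extI G K).comap (glAct g) := by
    rw [Ideal.map_le_iff_le_comap]
    intro r hr
    rw [Ideal.mem_comap, Ideal.mem_comap]
    have : glAct g (algebraMap (invariants n k G) _ r) = algebraMap (invariants n k G) _ r :=
      (mem_inv G r.1).1 r.2 g hg
    rw [this]
    exact Ideal.mem_map_of_mem _ hr
  exact this hf

lemma ext_quot (K : Ideal (invariants n k G)) {s : GLn} (hs : s ∈ G)
    {A : MvPolynomial (Fin n) k} (hA : ∀ f, ∃ d, f - glAct s f = A * d)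
    {f : MvPolynomial (Fin n) k} (hf : f ∈ extI G K) :
    ∃ d ∈ extI G K, f - glAct s f = A * d := by
  induction hf using Submodule.span_induction with
  | mem x hx =>
    obtain ⟨r, hr, rfl⟩ := hx
    refine ⟨0, zero_mem _, ?_⟩
    have : glAct s (algebraMap (invariants n k G) _ r) = algebraMap (invariants n k G) _ r :=
      (mem_inv G r.1).1 r.2 s hs
    rw [mul_zero, sub_eq_zero]
    exact this.symm
  | zero => exact ⟨0, zero_mem _, by simp⟩
  | add x y _ _ hx hy =>
    obtain ⟨d, hd, e⟩ := hx
    obtain ⟨d', hd', e'⟩ := hy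
    refine ⟨d + d', add_mem hd hd', ?_⟩
    rw [map_add]
    linear_combination e + e'
  | smul a x hx ih =>
    obtain ⟨d, hd, e⟩ := ih
    obtain ⟨c, hc⟩ := hA a
    refine ⟨c * x + glAct s a * d, add_mem (Ideal.mul_mem_left _ _ hx)
      (Ideal.mul_mem_left _ _ hd), ?_⟩
    rw [smul_eq_mul, map_mul]
    linear_combination x * hc + glAct s a * e

/-- Averaging over the group, up to the factor `|G|`. -/
noncomputable def avg [Fintype G] (f : MvPolynomial (Fin n) k) : MvPolynomial (Fin n) k :=
  ∑ g : G, glAct (g : GLn) f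

lemma avg_mem [Fintype G] (f : MvPolynomial (Fin n) k) : avg (G := G) f ∈ invariants n k G := by
  rw [mem_inv]
  intro g hg
  rw [avg, map_sum]
  refine Fintype.sum_equiv (Equiv.mulLeft (⟨g, hg⟩ : G)) _ _ ?_
  intro x
  simp [glAct_mul_apply]

lemma avg_ext [Fintype G] (K : Ideal (invariants n k G)) {f : MvPolynomial (Fin n) k}
    (hf : f ∈ extI G K) : ∀ a, ∃ r ∈ K, (r : MvPolynomial (Fin n) k) = avg (G := G) (a * f) := by
  induction hf using Submodule.span_induction with
  | mem x hx =>
    obtain ⟨r, hr, rfl⟩ := hx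
    intro a
    refine ⟨⟨_, avg_mem a⟩ * r, K.mul_mem_left _ hr, ?_⟩
    change avg (G := G) a * (r : MvPolynomial (Fin n) k) = avg (G := G) (a * r)
    rw [avg, avg, Finset.sum_mul]
    apply Finset.sum_congr rfl
    intro g _
    rw [map_mul, (mem_inv G r.1).1 r.2 g g.2]
  | zero => exact fun a => ⟨0, K.zero_mem, by simp [avg]⟩
  | add x y _ _ hx hy =>
    intro a
    obtain ⟨d, hd, e⟩ := hx a
    obtain ⟨d', hd', e'⟩ := hy a
    refine ⟨d + d', add_mem hd hd', ?_⟩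
    simp only [avg, mul_add, map_add, Finset.sum_add_distrib, Subalgebra.coe_add] at *
    rw [e, e']
  | smul b x hx ih =>
    intro a
    obtain ⟨r, hr, e⟩ := ih (a * b)
    exact ⟨r, hr, by rw [e, smul_eq_mul, mul_assoc]⟩

/-- Chevalley's lemma in colon-ideal form (i.e. flatness). -/
lemma chevalley [Fintype G] (hcard : (Fintype.card G : k) ≠ 0)
    (hgen : G = Subgroup.closure {g | g ∈ G ∧ IsPseudoreflection g})
    (K J : Ideal (invariants n k G)) (g0 : invariants n k G)
    (hJ : ∀ r, r * g0 ∈ K → r ∈ J) :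
    ∀ (N : ℕ) (h : MvPolynomial (Fin n) k), h.totalDegree ≤ N →
      (g0 : MvPolynomial (Fin n) k) * h ∈ extI G K → h ∈ extI G J := by
  intro N
  induction N using Nat.strong_induction_on with
  | _ N ih =>
  intro h hdeg hh
  have hrefl : ∀ s ∈ G, IsPseudoreflection s → h - glAct s h ∈ extI G J := by
    intro s hs hps
    obtain ⟨A, hA0, hA1, hA⟩ := exists_form s hps
    obtain ⟨d, hd⟩ := hA h
    obtain ⟨e, heK, he⟩ := ext_quot K hs hA hh
    rw [map_mul, (mem_inv G g0.1).1 g0.2 s hs] at he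
    have hde : (g0 : MvPolynomial (Fin n) k) * d = e := by
      apply mul_left_cancel₀ hA0
      linear_combination he - (g0 : MvPolynomial (Fin n) k) * hd
    rw [hd]
    by_cases hd0 : d = 0
    · rw [hd0, mul_zero]; exact zero_mem _
    apply Ideal.mul_mem_left
    have h1 : (A * d).totalDegree = 1 + d.totalDegree := by
      rw [totalDegree_mul_of_isDomain hA0 hd0, hA1.totalDegree hA0]
    have h2 : (h - glAct s h).totalDegree ≤ h.totalDegree :=
      (totalDegree_sub _ _).trans (max_le le_rfl (glAct_totalDegree s h))
    rw [hd, h1] at h2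
    exact ih d.totalDegree (by omega) d le_rfl (hde ▸ heK)
  have hall : ∀ g ∈ G, h - glAct g h ∈ extI G J := by
    intro g hg
    have hg' := hg
    rw [hgen] at hg'
    induction hg' using Subgroup.closure_induction with
    | mem x hx => exact hrefl x hx.1 hx.2
    | one => rw [glAct_one]; simp
    | mul x y hx hy ihx ihy =>
      rw [← hgen] at hx hy
      have := add_mem (ihx hx) (ext_stable J hx (ihy hy))
      rw [map_sub] at this
      rw [glAct_mul_apply]
      convert this using 1
      ring
    | inv x hx ihx =>
      rw [← hgen] at hx
      have := neg_mem (ext_stable J (inv_mem hx) (ihx hx))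
      rw [map_sub, ← glAct_mul_apply, inv_mul_cancel, glAct_one] at this
      convert this using 1
      simp
  have hsum : (Fintype.card G : MvPolynomial (Fin n) k) * h - avg (G := G) h ∈ extI G J := by
    have : (Fintype.card G : MvPolynomial (Fin n) k) * h - avg (G := G) h =
        ∑ g : G, (h - glAct (g : GLn) h) := by
      simp [avg, Finset.sum_sub_distrib]
    rw [this]
    exact sum_mem fun g _ => hall g g.2
  have havg : avg (G := G) h ∈ extI G J := by
    have hm : (⟨avg (G := G) h, avg_mem h⟩ : invariants n k G) ∈ J := by
      apply hJ
      obtain ⟨r, hr, e⟩ := avg_ext K hh 1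
      convert hr using 1
      apply Subtype.ext
      rw [e, one_mul]
      change avg (G := G) h * (g0 : MvPolynomial (Fin n) k) = _
      rw [avg, avg, Finset.sum_mul]
      apply Finset.sum_congr rfl
      intro g _
      rw [map_mul, (mem_inv G g0.1).1 g0.2 g g.2, mul_comm]
    exact Ideal.mem_map_of_mem _ hm
  have hc := Ideal.mul_mem_left (extI G J) (C ((Fintype.card G : k)⁻¹)) (add_mem hsum havg)
  have e : C ((Fintype.card G : k)⁻¹) * ((Fintype.card G : MvPolynomial (Fin n) k) * h -
      avg (G := G) h + avg (G := G) h) = h := by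
    rw [sub_add_cancel, ← mul_assoc, ← map_natCast (C (σ := Fin n) (R := k)), ← C_mul,
      inv_mul_cancel₀ hcard, C_1, one_mul]
  rwa [e] at hc

variable (G) in
/-- The augmentation ideal of the invariant ring. -/
noncomputable def aug : Ideal (invariants n k G) :=
  RingHom.ker ((constantCoeff (σ := Fin n) (R := k)).comp
    (algebraMap (invariants n k G) (MvPolynomial (Fin n) k)))

lemma mem_aug (r : invariants n k G) :
    r ∈ aug G ↔ constantCoeff (r : MvPolynomial (Fin n) k) = 0 := Iff.rfl

lemma mk_mul (r : invariants n k G) (f : MvPolynomial (Fin n) k) :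
    Ideal.Quotient.mkₐ k (extI G (aug G)) ((r : MvPolynomial (Fin n) k) * f) =
      constantCoeff (r : MvPolynomial (Fin n) k) • Ideal.Quotient.mkₐ k (extI G (aug G)) f := by
  rw [← map_smul, Ideal.Quotient.mkₐ_eq_mk, Ideal.Quotient.eq, smul_eq_C_mul, ← sub_mul]
  apply Ideal.mul_mem_right
  have hm : r - algebraMap k (invariants n k G) (constantCoeff (r : MvPolynomial (Fin n) k))
      ∈ aug G := by
    rw [mem_aug]
    change constantCoeff ((r : MvPolynomial (Fin n) k) - C _) = 0
    simp
  exact Ideal.mem_map_of_mem (algebraMap (invariants n k G) (MvPolynomial (Fin n) k)) hm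

lemma indep_fin [Fintype G] (hcard : (Fintype.card G : k) ≠ 0)
    (hgen : G = Subgroup.closure {g | g ∈ G ∧ IsPseudoreflection g}) :
    ∀ (m : ℕ) (h : Fin m → MvPolynomial (Fin n) k),
      LinearIndependent k (fun i => Ideal.Quotient.mkₐ k (extI G (aug G)) (h i)) →
      ∀ g : Fin m → invariants n k G, ∑ i, (g i : MvPolynomial (Fin n) k) * h i = 0 →
        ∀ i, g i = 0 := by
  intro m
  induction m with
  | zero => intro h _ g _ i; exact i.elim0
  | succ m ih =>
  intro h hli g hg
  rw [Fin.sum_univ_succ] at hg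
  let K : Ideal (invariants n k G) := Ideal.span (Set.range fun j : Fin m => g j.succ)
  let J : Ideal (invariants n k G) := Submodule.comap (LinearMap.mulRight (invariants n k G) (g 0)) K
  have hJ : ∀ r, r * g 0 ∈ K → r ∈ J := fun r hr => hr
  have h0 : h 0 ∈ extI G J := by
    refine chevalley hcard hgen K J (g 0) hJ _ (h 0) le_rfl ?_
    rw [eq_neg_of_add_eq_zero_left hg]
    refine neg_mem (sum_mem fun j _ => Ideal.mul_mem_right _ _ ?_)
    exact Ideal.mem_map_of_mem (algebraMap (invariants n k G) (MvPolynomial (Fin n) k))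
      (Ideal.subset_span ⟨j, rfl⟩)
  obtain ⟨u, huJ, hu⟩ : ∃ u ∈ J, u ∉ aug G := by
    by_contra! hc
    have : h 0 ∈ extI G (aug G) := Ideal.map_mono (fun x hx => hc x hx) h0
    exact hli.ne_zero 0 (Ideal.Quotient.eq_zero_iff_mem.2 this)
  have huK : u * g 0 ∈ K := huJ
  obtain ⟨r, hr⟩ := Ideal.mem_span_range_iff_exists_fun.1 huK
  rw [mem_aug] at hu
  have hr' : ∑ j : Fin m, (r j : MvPolynomial (Fin n) k) * (g j.succ) = u * g 0 := by
    have := congrArg (algebraMap (invariants n k G) (MvPolynomial (Fin n) k)) hr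
    rw [map_sum] at this
    exact this
  have hsucc : ∀ j : Fin m, g j.succ = 0 := by
    refine ih (fun j => (u : MvPolynomial (Fin n) k) * h j.succ + r j * h 0) ?_
      (fun j => g j.succ) ?_
    · rw [Fintype.linearIndependent_iff]
      intro c hc j
      rw [Fintype.linearIndependent_iff] at hli
      simp only [map_add, mk_mul] at hc
      have := hli (Fin.cons (∑ j, c j * constantCoeff (r j : MvPolynomial (Fin n) k))
        (fun j => c j * constantCoeff (u : MvPolynomial (Fin n) k))) (by
          rw [Fin.sum_univ_succ]
          simp only [Fin.cons_zero, Fin.cons_succ]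
          rw [← hc, Finset.sum_smul, ← Finset.sum_add_distrib]
          apply Finset.sum_congr rfl
          intro i _
          rw [smul_add, smul_smul, smul_smul, add_comm]) j.succ
      rw [Fin.cons_succ] at this
      exact (mul_eq_zero.1 this).resolve_right hu
    · have : ∑ j : Fin m, (g j.succ : MvPolynomial (Fin n) k) *
          ((u : MvPolynomial (Fin n) k) * h j.succ + r j * h 0) =
          u * (g 0 * h 0 + ∑ j : Fin m, (g j.succ : MvPolynomial (Fin n) k) * h j.succ) := by
        rw [mul_add, ← mul_assoc, ← hr', Finset.sum_mul, Finset.mul_sum, ← Finset.sum_add_distrib]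
        apply Finset.sum_congr rfl
        intro j _
        ring
      rw [this, hg, mul_zero]
  intro i
  refine Fin.cases ?_ hsucc i
  have h1 : u * g 0 = 0 := by rw [← hr]; simp [hsucc]
  refine (mul_eq_zero.1 h1).resolve_left ?_
  rintro rfl
  simp at hu

lemma indep [Fintype G] (hcard : (Fintype.card G : k) ≠ 0)
    (hgen : G = Subgroup.closure {g | g ∈ G ∧ IsPseudoreflection g})
    {ι : Type*} (h : ι → MvPolynomial (Fin n) k)
    (hli : LinearIndependent k (fun i => Ideal.Quotient.mkₐ k (extI G (aug G)) (h i))) :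
    LinearIndependent (invariants n k G) h := by
  rw [linearIndependent_iff_finset_linearIndependent]
  intro s
  rw [← linearIndependent_equiv s.equivFin.symm, Fintype.linearIndependent_iff]
  intro g hg
  refine indep_fin hcard hgen _ (fun i => h (s.equivFin.symm i)) ?_ g hg
  exact hli.comp (fun i => (s.equivFin.symm i : ι))
    (Subtype.val_injective.comp s.equivFin.symm.injective)

lemma component_inv (r : invariants n k G) (d : ℕ) :
    homogeneousComponent d (r : MvPolynomial (Fin n) k) ∈ invariants n k G := by
  rw [mem_inv]
  intro g hg
  rw [← glAct_component, (mem_inv G r.1).1 r.2 g hg]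

/-- Degree `d` part of an element of the Hilbert ideal lies in any `R`-submodule containing all
homogeneous elements of smaller degree. -/
lemma hilbert_component (N : Submodule (invariants n k G) (MvPolynomial (Fin n) k)) (d : ℕ)
    (hN : ∀ e < d, ∀ f : MvPolynomial (Fin n) k, f.IsHomogeneous e → f ∈ N)
    {f : MvPolynomial (Fin n) k} (hf : f ∈ extI G (aug G)) :
    ∀ a, homogeneousComponent d (a * f) ∈ N := by
  induction hf using Submodule.span_induction with
  | mem x hx =>
    obtain ⟨r, hr, rfl⟩ := hx
    intro a
    change homogeneousComponent d (a * (r : MvPolynomial (Fin n) k)) ∈ N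
    have h1 : a * (r : MvPolynomial (Fin n) k) =
        ∑ i ∈ Finset.range ((r : MvPolynomial (Fin n) k).totalDegree + 1),
        ∑ j ∈ Finset.range (a.totalDegree + 1),
          homogeneousComponent i (r : MvPolynomial (Fin n) k) * homogeneousComponent j a := by
      rw [← Finset.sum_mul_sum, sum_homogeneousComponent, sum_homogeneousComponent, mul_comm]
    rw [h1, map_sum]
    refine sum_mem fun i _ => ?_
    rw [map_sum]
    refine sum_mem fun j _ => ?_
    rw [homogeneousComponent_of_mem ((homogeneousComponent_isHomogeneous i _).mul
      (homogeneousComponent_isHomogeneous j a))]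
    split_ifs with hd
    · rcases Nat.eq_zero_or_pos i with rfl | hi
      · rw [SetLike.mem_coe, mem_aug] at hr
        rw [homogeneousComponent_zero, ← constantCoeff_eq, hr]
        simp
      · exact N.smul_mem (⟨_, component_inv r i⟩ : invariants n k G)
          (hN j (by omega) _ (homogeneousComponent_isHomogeneous j a))
    · exact zero_mem _
  | zero => intro a; simp
  | add x y _ _ hx hy =>
    intro a
    rw [mul_add, map_add]
    exact add_mem (hx a) (hy a)
  | smul b x hx ih =>
    intro a
    rw [smul_eq_mul, ← mul_assoc]
    exact ih _

lemma span_top {ι : Type*} (e : ι → MvPolynomial (Fin n) k)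
    (hhom : ∀ i, ∃ d, (e i).IsHomogeneous d)
    (hspan : Submodule.span k
      (Set.range fun i => Ideal.Quotient.mkₐ k (extI G (aug G)) (e i)) = ⊤) :
    Submodule.span (invariants n k G) (Set.range e) = ⊤ := by
  set N := Submodule.span (invariants n k G) (Set.range e) with hNdef
  have hk : ∀ (c : k) f, f ∈ N → c • f ∈ N := by
    intro c f hf
    have := N.smul_mem (algebraMap k (invariants n k G) c) hf
    rwa [algebraMap_smul] at this
  have key : ∀ d, ∀ f : MvPolynomial (Fin n) k, f.IsHomogeneous d → f ∈ N := by
    intro d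
    induction d using Nat.strong_induction_on with
    | _ d ih =>
    intro f hf
    have hq : Ideal.Quotient.mkₐ k (extI G (aug G)) f ∈ Submodule.span k
      (Set.range fun i => Ideal.Quotient.mkₐ k (extI G (aug G)) (e i)) := by
      rw [hspan]; trivial
    rw [Finsupp.mem_span_range_iff_exists_finsupp] at hq
    obtain ⟨c, hc⟩ := hq
    have hmem : f - c.sum (fun i a => a • e i) ∈ extI G (aug G) := by
      rw [← Ideal.Quotient.eq, ← Ideal.Quotient.mkₐ_eq_mk k, ← hc, Finsupp.sum, Finsupp.sum,
        map_sum]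
      simp only [map_smul]
    have h1 := hilbert_component N d ih hmem 1
    rw [one_mul, map_sub, homogeneousComponent_of_mem hf, if_pos rfl] at h1
    have h2 : homogeneousComponent d (c.sum (fun i a => a • e i)) ∈ N := by
      rw [Finsupp.sum, map_sum]
      refine sum_mem fun i _ => ?_
      rw [map_smul]
      apply hk
      obtain ⟨d', hd'⟩ := hhom i
      rw [homogeneousComponent_of_mem hd']
      split_ifs
      · exact Submodule.subset_span ⟨i, rfl⟩
      · exact zero_mem _
    have := add_mem h1 h2
    rwa [sub_add_cancel] at this
  rw [eq_top_iff]
  intro f _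
  rw [← sum_homogeneousComponent f]
  exact sum_mem fun i _ => key i _ (homogeneousComponent_isHomogeneous i f)

end

end STC

/-- Shephard–Todd–Chevalley, `(1) ⇒ (2)`: if a finite subgroup
`W ⊂ GL(V)` with `char k ∤ |W|` is generated by pseudoreflections, then `k[V]` is a
free module over the invariant ring `k[V]^W`. -/
theorem polynomials_free_over_invariants {n : ℕ} {k : Type*} [Field k]
    (G : Subgroup (LinearMap.GeneralLinearGroup k (Fin n → k))) [Fintype G]
    (hcard : (Fintype.card G : k) ≠ 0)
    (hgen : G = Subgroup.closure {g | g ∈ G ∧ IsPseudoreflection g}) :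
    Module.Free ↥(invariants n k G) (MvPolynomial (Fin n) k) := by
  classical
  let q := Ideal.Quotient.mkₐ k (STC.extI G (STC.aug G))
  let v : (Fin n →₀ ℕ) → _ := fun m => q (monomial m (1 : k))
  obtain ⟨κ, a, -, hsp, hli⟩ := exists_linearIndependent' k v
  have htop : Submodule.span k (Set.range v) = ⊤ := by
    have h1 : Set.range v = q.toLinearMap '' Set.range (fun m => monomial m (1 : k)) := by
      rw [← Set.range_comp]; rfl
    rw [h1, ← Submodule.map_span]
    have h2 := (basisMonomials (Fin n) k).span_eq
    rw [coe_basisMonomials] at h2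
    rw [h2, Submodule.map_top, LinearMap.range_eq_top]
    exact Ideal.Quotient.mkₐ_surjective k _
  have hI := STC.indep hcard hgen (fun i => monomial (a i) (1 : k)) hli
  have hS := STC.span_top (G := G) (fun i => monomial (a i) (1 : k))
    (fun i => ⟨_, isHomogeneous_monomial _ rfl⟩) (hsp.trans htop)
  exact Module.Free.of_basis (Module.Basis.mk hI hS.ge)
end

section
/- Let V be a finite-dimensional faithful representation of a finite group W over a field k with char(k) coprime to |W|. If k[V] is a free module over k[V]^W, then k[V]^W is a free polynomial algebra on dim V generators. -/
open MvPolynomial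

section Koszul
variable {S : Type*} [CommRing S] {n r : ℕ}

lemma koszul_module_prop {M ι : Type*} [AddCommGroup M] [Module S M] [Fintype ι]
    (B : Module.Basis ι S M) (f : Fin r → S)
    (hP : ∀ u : Fin r → S, ∑ i, u i * f i = 0 → ∀ i, u i ∈ Ideal.span (Set.range f))
    (w : Fin r → M) (hw : ∑ i, f i • w i = 0) (i : Fin r) :
    ∃ v : Fin r → M, w i = ∑ j, f j • v j := by
  have h1 : ∀ s, ∃ c : Fin r → S, ∑ j, c j * f j = B.repr (w i) s := by
    intro s
    have := hP (fun j => B.repr (w j) s) (by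
      have h := congrArg (fun m => B.repr m s) hw
      simpa [mul_comm] using h) i
    exact (Ideal.mem_span_range_iff_exists_fun).1 this
  choose c hc using h1
  refine ⟨fun j => ∑ s, c s j • B s, ?_⟩
  rw [← B.sum_repr (w i)]
  simp_rw [← hc, Finset.sum_smul, Finset.smul_sum, smul_smul]
  rw [Finset.sum_comm]
  simp_rw [mul_comm]

lemma koszul_contract_list (φ : Module.Dual S (Fin n → S)) (z : Fin r → Fin n → S)
    (L : List (Fin r)) (i : Fin r) (hi : i ∉ L) :
    ∃ c : Fin r → ExteriorAlgebra S (Fin n → S), c i = 0 ∧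
      CliffordAlgebra.contractLeft φ (L.map fun j => ExteriorAlgebra.ι S (z j)).prod =
        ∑ j, φ (z j) • c j := by
  induction L with
  | nil => exact ⟨0, rfl, by simp [CliffordAlgebra.contractLeft_one]⟩
  | cons l L ih =>
    simp only [List.mem_cons, not_or] at hi
    obtain ⟨c, hc, h⟩ := ih hi.2
    refine ⟨fun j => (if j = l then (L.map fun j => ExteriorAlgebra.ι S (z j)).prod else 0)
      - ExteriorAlgebra.ι S (z l) * c j, by simp [hc, hi.1], ?_⟩
    rw [List.map_cons, List.prod_cons]
    erw [CliffordAlgebra.contractLeft_ι_mul]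
    rw [h]
    simp only [smul_sub, Finset.sum_sub_distrib, smul_ite, smul_zero, Finset.sum_ite_eq',
      Finset.mem_univ, if_true, Finset.mul_sum, mul_smul_comm]

lemma koszul_not_boundary (x : Fin n → S) (hx : Ideal.span (Set.range x) ≠ ⊤)
    (f : Fin r → S) (z : Fin r → Fin n → S)
    (φ : Module.Dual S (Fin n → S)) (hφ : ∀ v, φ v = ∑ k, v k * x k)
    (hf : ∀ i, φ (z i) = f i)
    (hP : ∀ u : Fin r → S, ∑ i, u i * f i = 0 → ∀ i, u i ∈ Ideal.span (Set.range f))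
    (L : List (Fin r)) (hL : L.Nodup) (w : ExteriorAlgebra S (Fin n → S))
    (v : Fin r → ExteriorAlgebra S (Fin n → S)) :
    (L.map fun j => ExteriorAlgebra.ι S (z j)).prod ≠
      CliffordAlgebra.contractLeft φ w + ∑ j, f j • v j := by
  have hm : ∀ u, φ u ∈ Ideal.span (Set.range x) := fun u => by
    rw [hφ]
    exact Ideal.sum_mem _ fun k _ => Ideal.mul_mem_left _ _ (Ideal.subset_span ⟨k, rfl⟩)
  induction L generalizing w v with
  | nil =>
    intro h
    apply hx
    have key : ∀ w : ExteriorAlgebra S (Fin n → S), CliffordAlgebra.contractLeft φ w ∈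
        (Ideal.span (Set.range x)) • (⊤ : Submodule S (ExteriorAlgebra S (Fin n → S))) := by
      intro w
      induction w using CliffordAlgebra.left_induction with
      | algebraMap s => rw [CliffordAlgebra.contractLeft_algebraMap]; exact zero_mem _
      | add a b ha hb => rw [map_add]; exact add_mem ha hb
      | ι_mul a b hb =>
        rw [CliffordAlgebra.contractLeft_ι_mul]
        refine sub_mem (Submodule.smul_mem_smul (hm _) trivial) ?_
        refine Submodule.smul_induction_on hb ?_ ?_
        · intro s hs m _
          rw [mul_smul_comm]
          exact Submodule.smul_mem_smul hs trivial
        · intro a b ha hb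
          rw [mul_add]; exact add_mem ha hb
    have h1 : (1 : ExteriorAlgebra S (Fin n → S)) ∈
        (Ideal.span (Set.range x)) • (⊤ : Submodule S (ExteriorAlgebra S (Fin n → S))) := by
      simp only [List.map_nil, List.prod_nil] at h
      rw [h]
      refine add_mem (key w) (Submodule.sum_mem _ fun j _ => ?_)
      exact Submodule.smul_mem_smul (by rw [← hf]; exact hm _) trivial
    rw [Ideal.eq_top_iff_one]
    have h2 : ∀ y ∈ (Ideal.span (Set.range x)) •
        (⊤ : Submodule S (ExteriorAlgebra S (Fin n → S))),
        ExteriorAlgebra.algebraMapInv y ∈ Ideal.span (Set.range x) := by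
      intro y hy
      refine Submodule.smul_induction_on hy ?_ ?_
      · intro s hs m _
        rw [map_smul, smul_eq_mul]
        exact Ideal.mul_mem_right _ _ hs
      · intro a b ha hb
        rw [map_add]; exact add_mem ha hb
    simpa using h2 1 h1
  | cons i L ih =>
    intro h
    rw [List.nodup_cons] at hL
    obtain ⟨c, hc, hcL⟩ := koszul_contract_list φ z L i hL.1
    set p := (L.map fun j => ExteriorAlgebra.ι S (z j)).prod with hp
    rw [List.map_cons, List.prod_cons] at h
    have h' := congrArg (CliffordAlgebra.contractLeft φ) h
    erw [CliffordAlgebra.contractLeft_ι_mul] at h'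
    rw [map_add, CliffordAlgebra.contractLeft_contractLeft, zero_add, map_sum] at h'
    simp only [map_smul] at h'
    rw [hcL] at h'
    have h3 : ∑ j, f j • ((if j = i then p else 0) - ExteriorAlgebra.ι S (z i) * c j
        - CliffordAlgebra.contractLeft φ (v j)) = 0 := by
      simp only [smul_sub, Finset.sum_sub_distrib, smul_ite, smul_zero, Finset.sum_ite_eq',
        Finset.mem_univ, if_true]
      rw [← h', sub_eq_zero]
      simp only [hf, Finset.mul_sum, mul_smul_comm]
      rfl
    obtain ⟨v', hv'⟩ := koszul_module_prop
      (Module.Basis.ExteriorAlgebra (Pi.basisFun S (Fin n))) f hP _ h3 i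
    simp only [if_true, hc, mul_zero, sub_zero] at hv'
    exact ih hL.2 (v i) v' (by rw [← hv']; abel)

lemma koszul_le [IsDomain S] (x : Fin n → S) (hx : Ideal.span (Set.range x) ≠ ⊤)
    (f : Fin r → S) (hf : ∀ i, f i ∈ Ideal.span (Set.range x))
    (hP : ∀ u : Fin r → S, ∑ i, u i * f i = 0 → ∀ i, u i ∈ Ideal.span (Set.range f)) :
    r ≤ n := by
  by_contra hlt
  push Not at hlt
  choose z hz using fun i => (Ideal.mem_span_range_iff_exists_fun).1 (hf i)
  let φ : Module.Dual S (Fin n → S) := Fintype.linearCombination S x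
  have hφ : ∀ v, φ v = ∑ k, v k * x k := fun v => by
    simp [φ, Fintype.linearCombination_apply]
  refine koszul_not_boundary x hx f z φ hφ (fun i => by rw [hφ, hz]) hP (List.finRange r)
    (List.nodup_finRange r) 0 0 ?_
  have : (List.map (fun j => ExteriorAlgebra.ι S (z j)) (List.finRange r)).prod =
      ExteriorAlgebra.ιMulti S r z := by
    rw [ExteriorAlgebra.ιMulti_apply, List.ofFn_eq_map]
  rw [this]
  have hB := Module.Free.of_basis (Module.Basis.ExteriorAlgebra (Pi.basisFun S (Fin n)))
  have : ExteriorAlgebra.ιMulti S r z = 0 := by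
    apply AlternatingMap.map_linearDependent
    intro hli
    have := hli.fintype_card_le_finrank
    simp at this
    omega
  simp [this]
end Koszul

section Inv
variable {n : ℕ} {k : Type*} [Field k]

lemma mem_invariants_iff {G : Subgroup (LinearMap.GeneralLinearGroup k (Fin n → k))}
    {p : MvPolynomial (Fin n) k} : p ∈ invariants n k G ↔ ∀ g ∈ G, glAct g p = p := by
  simp [invariants, Algebra.mem_iInf, AlgHom.mem_equalizer]

lemma glAct_one' : glAct (1 : LinearMap.GeneralLinearGroup k (Fin n → k)) = AlgHom.id k _ := by
  apply MvPolynomial.algHom_ext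
  intro i
  simp [glAct, Pi.single_apply]

lemma glAct_mul' (g h : LinearMap.GeneralLinearGroup k (Fin n → k)) :
    glAct (g * h) = (glAct g).comp (glAct h) := by
  apply MvPolynomial.algHom_ext
  intro i
  simp only [glAct, AlgHom.comp_apply, aeval_X, map_sum, map_mul, mul_inv_rev,
    Finset.mul_sum, algHom_C, algebraMap_eq]
  rw [Finset.sum_comm]
  refine Finset.sum_congr rfl fun l _ => ?_
  simp_rw [← mul_assoc, ← C_mul, ← Finset.sum_mul, ← map_sum]
  congr 2
  rw [Units.val_mul, Module.End.mul_apply]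
  conv_lhs => rw [LinearMap.pi_apply_eq_sum_univ (h⁻¹).val ((g⁻¹).val (Pi.single l 1))]
  simp only [Finset.sum_apply, Pi.smul_apply, smul_eq_mul]
  refine Finset.sum_congr rfl fun j _ => ?_
  rw [mul_comm]
  congr 2
  have hs : (fun j' : Fin n => if j = j' then (1 : k) else 0) = Pi.single j 1 := by
    ext t
    simp [Pi.single_apply, eq_comm]
  rw [hs]

lemma glAct_homog (g : LinearMap.GeneralLinearGroup k (Fin n → k)) {p : MvPolynomial (Fin n) k}
    {d : ℕ} (hp : p.IsHomogeneous d) : (glAct g p).IsHomogeneous d := by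
  have := hp.aeval (S := k) (n := 1) (fun i => ∑ j, C (((g⁻¹ :
    LinearMap.GeneralLinearGroup k (Fin n → k)) : (Fin n → k) →ₗ[k] (Fin n → k))
      (Pi.single j 1) i) * X j) (fun i => IsHomogeneous.sum _ _ _ fun j _ =>
        isHomogeneous_C_mul_X _ _)
  rwa [one_mul] at this

lemma glAct_comp (g : LinearMap.GeneralLinearGroup k (Fin n → k)) (p : MvPolynomial (Fin n) k)
    (d : ℕ) : homogeneousComponent d (glAct g p) = glAct g (homogeneousComponent d p) := by
  conv_lhs => rw [← sum_homogeneousComponent p]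
  rw [map_sum, map_sum]
  simp_rw [homogeneousComponent_of_mem (glAct_homog g (homogeneousComponent_isHomogeneous _ p))]
  rw [Finset.sum_ite_eq]
  split_ifs with h
  · rfl
  · rw [homogeneousComponent_eq_zero, map_zero]
    simpa [Nat.lt_succ_iff] using h

lemma comp_mem_invariants {G : Subgroup (LinearMap.GeneralLinearGroup k (Fin n → k))}
    {p : MvPolynomial (Fin n) k} (hp : p ∈ invariants n k G) (d : ℕ) :
    homogeneousComponent d p ∈ invariants n k G := by
  rw [mem_invariants_iff] at *
  intro g hg
  rw [← glAct_comp, hp g hg]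

attribute [local instance] MvPolynomial.gradedAlgebra

lemma homogComp_mul {f a : MvPolynomial (Fin n) k} {e : ℕ} (hf : f.IsHomogeneous e) (d : ℕ) :
    homogeneousComponent d (f * a) =
      if e ≤ d then f * homogeneousComponent (d - e) a else 0 := by
  have := DirectSum.coe_decompose_mul_of_left_mem (homogeneousSubmodule (Fin n) k) (b := a) d
    (i := e) hf
  have hdec : ∀ (p : MvPolynomial (Fin n) k) (m : ℕ),
      ((DirectSum.decompose (homogeneousSubmodule (Fin n) k) p m :
        homogeneousSubmodule (Fin n) k m) : MvPolynomial (Fin n) k) =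
        homogeneousComponent m p := fun p m => decomposition.decompose'_apply p m
  rwa [hdec, hdec] at this

lemma reynolds (G : Subgroup (LinearMap.GeneralLinearGroup k (Fin n → k))) [Fintype G]
    (hcard : (Fintype.card G : k) ≠ 0) :
    ∃ ρ : MvPolynomial (Fin n) k → MvPolynomial (Fin n) k,
      (∀ p, ρ p ∈ invariants n k G) ∧ (∀ p ∈ invariants n k G, ρ p = p) ∧
      (∀ (r : ℕ) (p q : Fin r → MvPolynomial (Fin n) k), (∀ j, p j ∈ invariants n k G) →
        ρ (∑ j, q j * p j) = ∑ j, p j * ρ (q j)) := by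
  refine ⟨fun p => C (Fintype.card G : k)⁻¹ * ∑ g : G, glAct g.1 p, ?_, ?_, ?_⟩
  · intro p
    rw [mem_invariants_iff]
    intro g hg
    rw [map_mul, algHom_C, map_sum, algebraMap_eq]
    refine congrArg (fun y => C (Fintype.card G : k)⁻¹ * y) ?_
    refine Fintype.sum_equiv (Equiv.mulLeft (⟨g, hg⟩ : G)) _ _ fun h => ?_
    rw [Equiv.coe_mulLeft, Subgroup.coe_mul, glAct_mul', AlgHom.comp_apply]
  · intro p hp
    rw [mem_invariants_iff] at hp
    dsimp only
    rw [Finset.sum_congr rfl (fun (g : G) _ => hp g.1 g.2), Finset.sum_const, Finset.card_univ,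
      nsmul_eq_mul, ← mul_assoc, ← map_natCast (C : k →+* MvPolynomial (Fin n) k), ← C_mul,
      inv_mul_cancel₀ hcard, C_1, one_mul]
  · intro r p q hp
    dsimp only
    have h1 : ∀ g : G, glAct g.1 (∑ j, q j * p j) = ∑ j, p j * glAct g.1 (q j) := by
      intro g
      rw [map_sum]
      refine Finset.sum_congr rfl fun j _ => ?_
      rw [map_mul, mem_invariants_iff.1 (hp j) g.1 g.2, mul_comm]
    rw [Finset.sum_congr rfl (fun g _ => h1 g), Finset.sum_comm, Finset.mul_sum]
    refine Finset.sum_congr rfl fun j _ => ?_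
    rw [← Finset.mul_sum, mul_left_comm]

lemma invariants_integral (G : Subgroup (LinearMap.GeneralLinearGroup k (Fin n → k)))
    [Fintype G] : Algebra.IsIntegral ↥(invariants n k G) (MvPolynomial (Fin n) k) := by
  let _ : MulSemiringAction G (MvPolynomial (Fin n) k) :=
    { smul := fun g p => glAct g.1 p
      one_smul := fun p => by
        change glAct 1 p = p
        rw [glAct_one']; rfl
      mul_smul := fun g h p => by
        change glAct (g.1 * h.1) p = glAct g.1 (glAct h.1 p)
        rw [glAct_mul']; rfl
      smul_zero := fun g => map_zero (glAct g.1)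
      smul_add := fun g => map_add (glAct g.1)
      smul_one := fun g => map_one (glAct g.1)
      smul_mul := fun g => map_mul (glAct g.1) }
  have : Algebra.IsInvariant ↥(invariants n k G) (MvPolynomial (Fin n) k) G :=
    ⟨fun b hb => ⟨⟨b, mem_invariants_iff.2 fun g hg => hb ⟨g, hg⟩⟩, rfl⟩⟩
  exact Algebra.IsInvariant.isIntegral _ _ G

/-- homogeneous invariants of positive degree -/
def posInv (G : Subgroup (LinearMap.GeneralLinearGroup k (Fin n → k))) :
    Set (MvPolynomial (Fin n) k) :=
  {p | p ∈ invariants n k G ∧ ∃ d, 0 < d ∧ p.IsHomogeneous d}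

lemma exists_min_gens (G : Subgroup (LinearMap.GeneralLinearGroup k (Fin n → k))) :
    ∃ (r : ℕ) (f : Fin r → MvPolynomial (Fin n) k), (∀ i, f i ∈ posInv G) ∧
      Ideal.span (Set.range f) = Ideal.span (posInv G) ∧
      ∀ i, f i ∉ Ideal.span (f '' {j | j ≠ i}) := by
  classical
  have hex : ∃ m, ∃ t : Finset (MvPolynomial (Fin n) k), t.card = m ∧ ↑t ⊆ posInv G ∧
      Ideal.span (posInv G) = Ideal.span (t : Set (MvPolynomial (Fin n) k)) := by
    obtain ⟨t, h1, h2⟩ := (Submodule.fg_span_iff_fg_span_finset_subset (posInv G)).1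
      (IsNoetherian.noetherian (Ideal.span (posInv G)))
    exact ⟨_, t, rfl, h1, h2⟩
  obtain ⟨t, ht, hsub, hspan⟩ := Nat.find_spec hex
  have hmin := fun m => Nat.find_min hex (m := m)
  rw [← ht] at hmin
  have hrange : Set.range (fun i => ((t.equivFin.symm i : t) : MvPolynomial (Fin n) k)) = t := by
    ext p
    constructor
    · rintro ⟨i, rfl⟩
      exact (t.equivFin.symm i).2
    · intro hp
      exact ⟨t.equivFin ⟨p, hp⟩, by simp⟩
  refine ⟨t.card, fun i => (t.equivFin.symm i : t), fun i => hsub (t.equivFin.symm i).2,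
    by rw [hrange, hspan], fun i hi => ?_⟩
  set p := ((t.equivFin.symm i : t) : MvPolynomial (Fin n) k) with hp
  have hpt : p ∈ t := (t.equivFin.symm i).2
  have himg : (fun i => ((t.equivFin.symm i : t) : MvPolynomial (Fin n) k)) '' {j | j ≠ i} ⊆
      (t.erase p : Finset _) := by
    rintro _ ⟨j, hj, rfl⟩
    simp only [Finset.coe_erase, Set.mem_sdiff, Set.mem_singleton_iff]
    refine ⟨(t.equivFin.symm j).2, fun h => hj ?_⟩
    exact t.equivFin.symm.injective (Subtype.ext h)
  have hp' : p ∈ Ideal.span ((t.erase p : Finset _) : Set (MvPolynomial (Fin n) k)) :=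
    Ideal.span_mono himg hi
  refine hmin (t.erase p).card (Finset.card_erase_lt_of_mem hpt) ⟨t.erase p, rfl, ?_, ?_⟩
  · exact fun q hq => hsub (Finset.mem_of_mem_erase hq)
  · rw [hspan]
    apply le_antisymm
    · rw [Ideal.span_le]
      intro q hq
      by_cases h : q = p
      · rw [h]; exact hp'
      · exact Ideal.subset_span (Finset.mem_erase.2 ⟨h, hq⟩)
    · exact Ideal.span_mono (Finset.erase_subset _ _)

lemma mem_span_posInv {G : Subgroup (LinearMap.GeneralLinearGroup k (Fin n → k))}
    {p : MvPolynomial (Fin n) k} (hp : p ∈ invariants n k G) (h0 : coeff 0 p = 0) :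
    p ∈ Ideal.span (posInv G) := by
  rw [← sum_homogeneousComponent p]
  refine Ideal.sum_mem _ fun d _ => ?_
  rcases Nat.eq_zero_or_pos d with rfl | hd
  · simp [homogeneousComponent_zero, h0]
  · exact Ideal.subset_span ⟨comp_mem_invariants hp d, d, hd,
      homogeneousComponent_isHomogeneous d p⟩

lemma gens_prop {G : Subgroup (LinearMap.GeneralLinearGroup k (Fin n → k))}
    (hfree : Module.Free ↥(invariants n k G) (MvPolynomial (Fin n) k))
    {r : ℕ} (f : Fin r → MvPolynomial (Fin n) k) (hf : ∀ i, f i ∈ posInv G)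
    (hspan : Ideal.span (Set.range f) = Ideal.span (posInv G))
    (hmin : ∀ i, f i ∉ Ideal.span (f '' {j | j ≠ i}))
    (u : Fin r → MvPolynomial (Fin n) k) (hu : ∑ i, u i * f i = 0) (i : Fin r) :
    u i ∈ Ideal.span (Set.range f) := by
  classical
  let B := Module.Free.chooseBasis ↥(invariants n k G) (MvPolynomial (Fin n) k)
  have key : ∀ s, (B.repr (u i) s : MvPolynomial (Fin n) k) ∈ Ideal.span (posInv G) := by
    intro s
    refine mem_span_posInv (B.repr (u i) s).2 ?_
    by_contra hc
    apply hmin i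
    set J := Ideal.span (f '' {j | j ≠ i}) with hJ
    have hJh : J.IsHomogeneous (homogeneousSubmodule (Fin n) k) := by
      apply Ideal.homogeneous_span
      rintro _ ⟨j, _, rfl⟩
      obtain ⟨d, _, h⟩ := (hf j).2
      exact ⟨d, h⟩
    have h1 : ∑ j, f j * (B.repr (u j) s : MvPolynomial (Fin n) k) = 0 := by
      have h2 : ∑ j, (⟨f j, (hf j).1⟩ : ↥(invariants n k G)) • u j = 0 := by
        rw [← hu]
        refine Finset.sum_congr rfl fun j _ => ?_
        rw [mul_comm]; rfl
      have h3 := congrArg (fun m => ((B.repr m s : ↥(invariants n k G)) :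
        MvPolynomial (Fin n) k)) h2
      simpa using h3
    rw [← Finset.add_sum_erase _ _ (Finset.mem_univ i)] at h1
    have h4 : f i * (B.repr (u i) s : MvPolynomial (Fin n) k) ∈ J := by
      rw [eq_neg_of_add_eq_zero_left h1]
      refine J.neg_mem (Ideal.sum_mem _ fun j hj => Ideal.mul_mem_right _ _ ?_)
      exact Ideal.subset_span ⟨j, Finset.ne_of_mem_erase hj, rfl⟩
    obtain ⟨d, _, hd⟩ := (hf i).2
    have h5 := homogeneousComponent_mem_of_mem hJh h4 (n := d)
    rw [homogComp_mul hd, if_pos le_rfl, Nat.sub_self, homogeneousComponent_zero] at h5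
    have h6 := J.mul_mem_right (C (coeff 0 (B.repr (u i) s : MvPolynomial (Fin n) k))⁻¹) h5
    rwa [mul_assoc, ← C_mul, mul_inv_cancel₀ hc, C_1, mul_one] at h6
  rw [hspan, ← B.linearCombination_repr (u i), Finsupp.linearCombination_apply, Finsupp.sum]
  refine Ideal.sum_mem _ fun s _ => ?_
  rw [Algebra.smul_def]
  exact Ideal.mul_mem_right _ _ (key s)

lemma gens_adjoin (G : Subgroup (LinearMap.GeneralLinearGroup k (Fin n → k))) [Fintype G]
    (hcard : (Fintype.card G : k) ≠ 0)
    {r : ℕ} (f : Fin r → MvPolynomial (Fin n) k) (hf : ∀ i, f i ∈ posInv G)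
    (hspan : Ideal.span (Set.range f) = Ideal.span (posInv G)) :
    Algebra.adjoin k (Set.range f) = invariants n k G := by
  apply le_antisymm
  · rw [Algebra.adjoin_le_iff]
    rintro _ ⟨i, rfl⟩
    exact (hf i).1
  obtain ⟨ρ, hρ1, hρ2, hρ3⟩ := reynolds G hcard
  have key : ∀ d : ℕ, ∀ p ∈ invariants n k G, p.IsHomogeneous d →
      p ∈ Algebra.adjoin k (Set.range f) := by
    intro d
    induction d using Nat.strong_induction_on with
    | _ d ih =>
      intro p hp hpd
      rcases Nat.eq_zero_or_pos d with rfl | hd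
      · rw [← homogeneousComponent_eq_self hpd, homogeneousComponent_zero]
        exact Subalgebra.algebraMap_mem _ _
      have hpI : p ∈ Ideal.span (Set.range f) := by
        rw [hspan]; exact Ideal.subset_span ⟨hp, d, hd, hpd⟩
      obtain ⟨c, hc⟩ := Ideal.mem_span_range_iff_exists_fun.1 hpI
      have h1 : p = ∑ j, f j * ρ (c j) := by
        conv_lhs => rw [← hρ2 p hp, ← hc]
        exact hρ3 r f c fun j => (hf j).1
      rw [← homogeneousComponent_eq_self hpd, h1, map_sum]
      refine Subalgebra.sum_mem _ fun j _ => ?_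
      obtain ⟨e, he, hje⟩ := (hf j).2
      rw [homogComp_mul hje]
      split_ifs with hle
      · refine Subalgebra.mul_mem _ (Algebra.subset_adjoin ⟨j, rfl⟩) ?_
        exact ih (d - e) (by omega) _ (comp_mem_invariants (hρ1 _) _)
          (homogeneousComponent_isHomogeneous _ _)
      · exact Subalgebra.zero_mem _
  intro p hp
  rw [← sum_homogeneousComponent p]
  exact Subalgebra.sum_mem _ fun d _ => key d _ (comp_mem_invariants hp d)
    (homogeneousComponent_isHomogeneous _ _)

lemma vars_span_aux (p : MvPolynomial (Fin n) k) :
    p ∈ Ideal.span (Set.range (X : Fin n → MvPolynomial (Fin n) k)) ↔ coeff 0 p = 0 := by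
  rw [← Set.image_univ, mem_ideal_span_X_image]
  constructor
  · intro h
    by_contra h0
    obtain ⟨i, _, hi⟩ := h 0 (mem_support_iff.2 h0)
    simp at hi
  · intro h m hm
    by_contra! hcon
    have : m = 0 := by ext i; simpa using hcon i
    rw [mem_support_iff, this] at hm
    exact hm h

end Inv

theorem invariants_polynomial_algebra {n : ℕ} {k : Type*} [Field k]
    (G : Subgroup (LinearMap.GeneralLinearGroup k (Fin n → k))) [Fintype G]
    (hcard : (Fintype.card G : k) ≠ 0)
    (hfree : Module.Free ↥(invariants n k G) (MvPolynomial (Fin n) k)) :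
    ∃ f : Fin n → ↥(invariants n k G),
      Function.Bijective (aeval (R := k) f : MvPolynomial (Fin n) k →ₐ[k] _) := by
  obtain ⟨r, f, hf, hspan, hmin⟩ := exists_min_gens G
  have hle : r ≤ n := by
    refine koszul_le (X : Fin n → MvPolynomial (Fin n) k) ?_ f ?_
      (gens_prop hfree f hf hspan hmin)
    · rw [Ne, Ideal.eq_top_iff_one, vars_span_aux]
      simp
    · intro i
      rw [vars_span_aux]
      obtain ⟨d, hd, h⟩ := (hf i).2
      exact h.coeff_eq_zero (by simpa using hd.ne)
  have hadj := gens_adjoin G hcard f hf hspan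
  have hint := invariants_integral G
  have halg : Algebra.IsAlgebraic (Algebra.adjoin k (Set.range f)) (MvPolynomial (Fin n) k) := by
    rw [hadj]
    infer_instance
  have htr : Algebra.trdeg k (MvPolynomial (Fin n) k) = n := by
    rw [MvPolynomial.trdeg_of_isDomain]; simp
  have hb : IsTranscendenceBasis k f := by
    apply Algebra.IsAlgebraic.isTranscendenceBasis_of_lift_le_trdeg_of_finite
    rw [htr]
    simpa using hle
  have hrn : r = n := by
    have h := hb.lift_cardinalMk_eq_trdeg
    rw [htr] at h
    simpa using h
  subst hrn
  have hval : ∀ q, ((aeval (R := k) (fun i => (⟨f i, (hf i).1⟩ : ↥(invariants r k G))) q :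
      ↥(invariants r k G)) : MvPolynomial (Fin r) k) = aeval f q := by
    intro q
    have : ((invariants r k G).val.comp
      (aeval (R := k) (fun i => (⟨f i, (hf i).1⟩ : ↥(invariants r k G))))) = aeval f := by
      apply MvPolynomial.algHom_ext
      intro i
      simp
    exact DFunLike.congr_fun this q
  refine ⟨fun i => ⟨f i, (hf i).1⟩, ?_, ?_⟩
  · intro p q hpq
    apply hb.1
    have := congrArg (fun y : ↥(invariants r k G) => (y : MvPolynomial (Fin r) k)) hpq
    simp only [hval] at this
    exact this
  · rintro ⟨y, hy⟩
    have hy' := hy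
    rw [← hadj, Algebra.adjoin_range_eq_range_aeval] at hy'
    obtain ⟨q, hq⟩ := hy'
    exact ⟨q, Subtype.ext ((hval q).trans hq)⟩
end
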